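/- arXiv:2201.08895 — 2 statements merged into one kernel-verified Lean document; each statement's English description precedes it below -/
import Mathlib

section
/- Let k ≥ 2, let φ be a kCNF formula, and let π ⊆ φ be a maximal packing, i.e., a packing such that every clause of φ shares a variable with some clause of π. Then for every assignment β : vars(π) → {0,1}, the restriction φ|_β is a (k−1)CNF formula. -/
/-! An original clause `c` surviving the restriction to `cnfVars π` contains no literal made true,
so each of its literals on a variable of `cnfVars π` is made false and is deleted. Maximality of
`π` provides at least one such literal, so `c` loses a literal and keeps at most `k - 1`
(`exists_litFalse`). The added unit clauses have one literal, and `1 ≤ k - 1` because `2 ≤ k`.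
Validity passes to subclauses and holds for unit clauses. -/

open Finset

open scoped Classical

/-- A literal is a propositional variable (a natural number) together with a sign. -/
abbrev PLit := ℕ × Bool

/-- A clause is a finite set of literals. -/
abbrev PClause := Finset PLit

/-- A CNF formula is a finite set of clauses. -/
abbrev PCnf := Finset PClause

/-- A clause is valid if it contains no variable together with its negation. -/
def clauseValid (c : PClause) : Prop := ∀ v : ℕ, ¬((v, true) ∈ c ∧ (v, false) ∈ c)

/-- The variables occurring in a clause. -/
def clauseVars (c : PClause) : Finset ℕ := c.image Prod.fst

/-- A CNF formula is valid if all of its clauses are. -/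
def cnfValid (φ : PCnf) : Prop := ∀ c ∈ φ, clauseValid c

/-- The variables occurring in a CNF formula. -/
def cnfVars (φ : PCnf) : Finset ℕ := φ.sup clauseVars

/-- `φ` is a `k`CNF formula: all clauses are valid and have at most `k` literals. -/
def IsKCnf (k : ℕ) (φ : PCnf) : Prop := cnfValid φ ∧ ∀ c ∈ φ, c.card ≤ k

/-- An assignment is represented by the finite set `S` of variables set to true;
`litSat S l` says that the literal `l` is made true. -/
def litSat (S : Finset ℕ) (l : PLit) : Prop := if l.2 then l.1 ∈ S else l.1 ∉ S

/-- A clause is satisfied if it contains a literal made true. -/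
def clauseSat (S : Finset ℕ) (c : PClause) : Prop := ∃ l ∈ c, litSat S l

/-- A CNF formula is satisfied if all of its clauses are. -/
def cnfSat (S : Finset ℕ) (φ : PCnf) : Prop := ∀ c ∈ φ, clauseSat S c

/-- The satisfaction probability `σ(φ)`: the fraction of assignments
`β : vars(φ) → {0,1}` (represented as subsets of `cnfVars φ`) satisfying `φ`. -/
noncomputable def satProb (φ : PCnf) : ℝ :=
  ((cnfVars φ).powerset.filter (fun S => cnfSat S φ)).card / 2 ^ (cnfVars φ).card

/-- The set of satisfaction probabilities of `k`CNF formulas. -/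
def kcnfSpectrum (k : ℕ) : Set ℝ := {x | ∃ φ : PCnf, IsKCnf k φ ∧ satProb φ = x}

/-- A packing: a set of pairwise variable-disjoint clauses. -/
def IsPacking (π : PCnf) : Prop :=
  ∀ c ∈ π, ∀ c' ∈ π, c ≠ c' → Disjoint (clauseVars c) (clauseVars c')

/-- A sunflower with core `c`. -/
def IsSunflower (ψ : PCnf) (c : PClause) : Prop :=
  (∀ e ∈ ψ, c ⊆ e) ∧
    ∀ e ∈ ψ, ∀ e' ∈ ψ, e ≠ e' → clauseVars e ∩ clauseVars e' = clauseVars c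

/-- The link of a clause `c` in `φ`: all superclauses of `c` in `φ`. -/
noncomputable def link (φ : PCnf) (c : PClause) : PCnf := φ.filter (fun e => c ⊆ e)

/-- The literal `l` is made true by the assignment `β : V → {0,1}` represented by `S ⊆ V`. -/
def litTrue (V S : Finset ℕ) (l : PLit) : Prop :=
  l.1 ∈ V ∧ (if l.2 then l.1 ∈ S else l.1 ∉ S)

/-- The literal `l` is made false by the assignment `β : V → {0,1}` represented by `S ⊆ V`. -/
def litFalse (V S : Finset ℕ) (l : PLit) : Prop :=
  l.1 ∈ V ∧ ¬(if l.2 then l.1 ∈ S else l.1 ∉ S)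

/-- The restriction `φ|_β` of `φ` to the assignment `β : V → {0,1}` represented by
`S ⊆ V`: remove every clause containing a literal made true by `β`, delete from the
remaining clauses all literals made false by `β`, and add the unit clause `{v}` for
each `v ∈ S` and the unit clause `{¬v}` for each `v ∈ V \ S`. -/
noncomputable def restrict (φ : PCnf) (V S : Finset ℕ) : PCnf :=
  ((φ.filter fun c => ¬ ∃ l ∈ c, litTrue V S l).image fun c =>
      c.filter fun l => ¬ litFalse V S l)
    ∪ S.image (fun v => ({(v, true)} : PClause))
    ∪ (V \ S).image (fun v => ({(v, false)} : PClause))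

theorem clauseValid_mono {c d : PClause} (h : c ⊆ d) (hd : clauseValid d) : clauseValid c :=
  fun v hv => hd v ⟨h hv.1, h hv.2⟩

theorem clauseValid_singleton (l : PLit) : clauseValid {l} := by
  rintro v ⟨h₁, h₂⟩
  rw [Finset.mem_singleton] at h₁ h₂
  simpa using h₁.trans h₂.symm

/-- A clause that meets the assigned variables and is not satisfied contains a false literal. -/
theorem exists_litFalse {V S : Finset ℕ} {c : PClause} (hV : (clauseVars c ∩ V).Nonempty)
    (hc : ¬ ∃ l ∈ c, litTrue V S l) : ∃ l ∈ c, litFalse V S l := by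
  obtain ⟨v, hv⟩ := hV
  obtain ⟨hvc, hvV⟩ := Finset.mem_inter.1 hv
  obtain ⟨l, hl, rfl⟩ := Finset.mem_image.1 hvc
  exact ⟨l, hl, hvV, fun h => hc ⟨l, hl, hvV, h⟩⟩

theorem clauseVars_subset_cnfVars {φ : PCnf} {c : PClause} (hc : c ∈ φ) :
    clauseVars c ⊆ cnfVars φ :=
  Finset.le_sup (f := clauseVars) hc

/-- Every clause of a restriction is an original unsatisfied clause without its false literals,
or a unit clause. -/
theorem mem_restrict_cases {φ : PCnf} {V S : Finset ℕ} {d : PClause} (hd : d ∈ restrict φ V S) :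
    (∃ c ∈ φ, (¬ ∃ l ∈ c, litTrue V S l) ∧ (c.filter fun l => ¬ litFalse V S l) = d) ∨
      ∃ l : PLit, d = {l} := by
  rcases Finset.mem_union.1 hd with hd | hd
  · rcases Finset.mem_union.1 hd with hd | hd
    · obtain ⟨c, hc, hcd⟩ := Finset.mem_image.1 hd
      obtain ⟨hcφ, hct⟩ := Finset.mem_filter.1 hc
      exact Or.inl ⟨c, hcφ, hct, hcd⟩
    · obtain ⟨v, -, rfl⟩ := Finset.mem_image.1 hd
      exact Or.inr ⟨_, rfl⟩
  · obtain ⟨v, -, rfl⟩ := Finset.mem_image.1 hd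
    exact Or.inr ⟨_, rfl⟩

/-- Restricting a `k`CNF formula along any assignment of the variables of a
maximal packing yields a `(k-1)`CNF formula. -/
theorem restrict_maximal_packing (k : ℕ) (hk : 2 ≤ k) (φ π : PCnf)
    (hφ : IsKCnf k φ) (hsub : π ⊆ φ) (hpack : IsPacking π)
    (hmaximal : ∀ c ∈ φ, ∃ c' ∈ π, (clauseVars c ∩ clauseVars c').Nonempty) :
    ∀ S ⊆ cnfVars π, IsKCnf (k - 1) (restrict φ (cnfVars π) S) := by
  intro S _
  refine ⟨fun d hd => ?_, fun d hd => ?_⟩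
  · rcases mem_restrict_cases hd with ⟨c, hc, -, rfl⟩ | ⟨l, rfl⟩
    · exact clauseValid_mono (Finset.filter_subset _ _) (hφ.1 c hc)
    · exact clauseValid_singleton l
  · rcases mem_restrict_cases hd with ⟨c, hc, hct, rfl⟩ | ⟨l, rfl⟩
    · obtain ⟨c', hc', hne⟩ := hmaximal c hc
      obtain ⟨l, hl, hlf⟩ := exists_litFalse
        (hne.mono (Finset.inter_subset_inter_left (clauseVars_subset_cnfVars hc'))) hct
      have hlt : (c.filter fun l => ¬ litFalse (cnfVars π) S l).card < c.card :=
        Finset.card_lt_card (Finset.filter_ssubset.2 ⟨l, hl, not_not.2 hlf⟩)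
      have hck := hφ.2 c hc
      omega
    · rw [Finset.card_singleton]
      omega
end

section
/- For every k ≥ 2 and every kCNF formula φ there exist p ∈ ℕ and finitely many (k−1)CNF formulas φ₁, …, φ_m with m ≤ 2^{kp} such that σ(φ) = Σ_{i=1}^m σ(φ_i) and σ(φ) ≤ (1 − 2^{−k})^p. -/
open Finset

open scoped Classical

/-!
Let `π` be a packing of clauses of `φ` of maximum size, let `p` be the number of its clauses and
`V` the set of its variables, so that `|V| ≤ k * p`.

* The clauses of `π` are variable-disjoint, so the events that they are satisfied are independent,
  and each has probability at most `1 - 2^{-k}`. Hence `σ(φ) ≤ σ(π) ≤ (1 - 2^{-k})^p`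
  (`satProb_packing_le`).
* Splitting the satisfying assignments of `φ` according to their trace on `V` gives
  `σ(φ) = ∑ σ(φ|_β)`, the sum running over the `2^{|V|}` assignments `β` of `V`
  (`satProb_eq_sum_restrict`).
* By maximality every nonempty clause of `φ` has a variable in `V`, so it either disappears from
  `φ|_β` or loses a literal; the added unit clauses have size `1 ≤ k - 1`. Hence every `φ|_β` is a
  `(k-1)`CNF formula (`isKCnf_restrict`).

Probabilities are compared through `satCount W φ`, the number of satisfying assignments over an
arbitrary variable set `W`, which is multiplicative over disjoint sets of variables
(`satCount_union`).
-/

/-! ### Satisfaction counts and independence -/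

/-- The number of assignments of the variables in `W` (represented as subsets of `W`) that
satisfy `φ`. -/
noncomputable def satCount (W : Finset ℕ) (φ : PCnf) : ℕ :=
  (W.powerset.filter (fun S => cnfSat S φ)).card

lemma mem_cnfVars {φ : PCnf} {v : ℕ} : v ∈ cnfVars φ ↔ ∃ c ∈ φ, ∃ l ∈ c, l.1 = v := by
  simp only [cnfVars, Finset.mem_sup, clauseVars, Finset.mem_image]

lemma cnfVars_mono {φ ψ : PCnf} (h : φ ⊆ ψ) : cnfVars φ ⊆ cnfVars ψ :=
  Finset.sup_mono h

/-- Satisfaction depends only on the values of the occurring variables. -/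
lemma cnfSat_congr {φ : PCnf} {S T : Finset ℕ} (h : ∀ v ∈ cnfVars φ, v ∈ S ↔ v ∈ T) :
    cnfSat S φ ↔ cnfSat T φ := by
  have key : ∀ c ∈ φ, ∀ l ∈ c, (litSat S l ↔ litSat T l) := by
    intro c hc l hl
    have := h l.1 (mem_cnfVars.2 ⟨c, hc, l, hl, rfl⟩)
    simp [litSat, this]
  constructor
  · intro hs c hc
    obtain ⟨l, hl, hsat⟩ := hs c hc
    exact ⟨l, hl, (key c hc l hl).1 hsat⟩
  · intro hs c hc
    obtain ⟨l, hl, hsat⟩ := hs c hc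
    exact ⟨l, hl, (key c hc l hl).2 hsat⟩

lemma cnfSat_union {φ ψ : PCnf} {S : Finset ℕ} :
    cnfSat S (φ ∪ ψ) ↔ cnfSat S φ ∧ cnfSat S ψ := by
  simp only [cnfSat, Finset.mem_union, or_imp, forall_and]

/-- Formulas over disjoint sets of variables are satisfied independently. -/
lemma satCount_union {A B : Finset ℕ} (hAB : Disjoint A B) {φ ψ : PCnf}
    (hφ : cnfVars φ ⊆ A) (hψ : cnfVars ψ ⊆ B) :
    satCount (A ∪ B) (φ ∪ ψ) = satCount A φ * satCount B ψ := by
  rw [satCount, satCount, satCount, ← Finset.card_product]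
  have hd : ∀ v, v ∈ A → v ∉ B := fun v h1 h2 => Finset.disjoint_left.1 hAB h1 h2
  refine Finset.card_nbij' (fun S => (S ∩ A, S ∩ B)) (fun P => P.1 ∪ P.2) ?_ ?_ ?_ ?_
  · intro S hS
    simp only [Finset.coe_filter, Finset.mem_powerset, Set.mem_ofPred_eq, cnfSat_union] at hS
    simp only [Finset.coe_product, Set.mem_prod, Finset.coe_filter, Finset.mem_powerset,
      Set.mem_ofPred_eq]
    refine ⟨⟨Finset.inter_subset_right, ?_⟩, Finset.inter_subset_right, ?_⟩
    · exact (cnfSat_congr fun v hv => by simp [hφ hv]).1 hS.2.1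
    · exact (cnfSat_congr fun v hv => by simp [hψ hv]).1 hS.2.2
  · rintro ⟨S, T⟩ hST
    simp only [Finset.coe_product, Set.mem_prod, Finset.coe_filter, Finset.mem_powerset,
      Set.mem_ofPred_eq] at hST
    obtain ⟨⟨hSA, hS⟩, hTB, hT⟩ := hST
    simp only [Finset.coe_filter, Finset.mem_powerset, Set.mem_ofPred_eq, cnfSat_union]
    refine ⟨Finset.union_subset_union hSA hTB, ?_, ?_⟩
    · refine (cnfSat_congr fun v hv => ?_).1 hS
      have := hd v (hφ hv)
      have := @hTB v
      simp only [Finset.mem_union]; tauto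
    · refine (cnfSat_congr fun v hv => ?_).1 hT
      have := hd v
      have := hψ hv
      have := @hSA v
      simp only [Finset.mem_union]; tauto
  · intro S hS
    simp only [Finset.coe_filter, Finset.mem_powerset, Set.mem_ofPred_eq] at hS
    simp only [← Finset.inter_union_distrib_left]
    exact Finset.inter_eq_left.2 hS.1
  · rintro ⟨S, T⟩ hST
    simp only [Finset.coe_product, Set.mem_prod, Finset.coe_filter, Finset.mem_powerset,
      Set.mem_ofPred_eq] at hST
    obtain ⟨⟨hSA, -⟩, hTB, -⟩ := hST
    ext v
    · have := hd v
      have := @hSA v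
      have := @hTB v
      simp only [Finset.mem_union, Finset.mem_inter]; tauto
    · have := hd v
      have := @hSA v
      have := @hTB v
      simp only [Finset.mem_union, Finset.mem_inter]; tauto

lemma satCount_empty (W : Finset ℕ) : satCount W ∅ = 2 ^ W.card := by
  simp [satCount, cnfSat]

/-- The satisfaction probability may be computed over any larger set of variables. -/
lemma satProb_eq {φ : PCnf} {W : Finset ℕ} (h : cnfVars φ ⊆ W) :
    satProb φ = satCount W φ / 2 ^ W.card := by
  have h1 := satCount_union (A := cnfVars φ) (B := W \ cnfVars φ) (φ := φ) (ψ := ∅)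
    Finset.disjoint_sdiff subset_rfl (by simp [cnfVars])
  rw [Finset.union_empty, Finset.union_sdiff_of_subset h, satCount_empty] at h1
  have h2 : W.card = (cnfVars φ).card + (W \ cnfVars φ).card := by
    have := Finset.card_sdiff_add_card_eq_card h
    omega
  change (satCount (cnfVars φ) φ : ℝ) / _ = _
  rw [h1, h2, pow_add]
  push_cast
  field_simp

lemma satProb_union {φ ψ : PCnf} (h : Disjoint (cnfVars φ) (cnfVars ψ)) :
    satProb (φ ∪ ψ) = satProb φ * satProb ψ := by
  have hsub : cnfVars (φ ∪ ψ) ⊆ cnfVars φ ∪ cnfVars ψ := by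
    simp [cnfVars, Finset.sup_union]
  rw [satProb_eq hsub, satProb_eq (subset_refl (cnfVars φ)),
    satProb_eq (subset_refl (cnfVars ψ)), satCount_union h subset_rfl subset_rfl,
    Finset.card_union_of_disjoint h, pow_add]
  push_cast
  field_simp

lemma satProb_nonneg (φ : PCnf) : 0 ≤ satProb φ := by
  unfold satProb; positivity

lemma satProb_anti {φ ψ : PCnf} (h : ψ ⊆ φ) : satProb φ ≤ satProb ψ := by
  rw [satProb_eq (subset_refl (cnfVars φ)), satProb_eq (cnfVars_mono h)]
  have : satCount (cnfVars φ) φ ≤ satCount (cnfVars φ) ψ :=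
    Finset.card_le_card (Finset.monotone_filter_right _ fun S _ hS c hc => hS c (h hc))
  gcongr

/-! ### Packings have small satisfaction probability -/

/-- A clause with at most `k` literals is falsified by at least one of the at most `2^k`
assignments of its variables. -/
lemma satProb_singleton_le {k : ℕ} {c : PClause} (hv : clauseValid c) (hc : c.card ≤ k) :
    satProb {c} ≤ 1 - (1 / 2 : ℝ) ^ k := by
  have hvars : cnfVars {c} = clauseVars c := by simp [cnfVars]
  rw [satProb_eq (subset_refl (cnfVars {c})), hvars]
  have hcard : (clauseVars c).card ≤ k := Finset.card_image_le.trans hc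
  -- The assignment making exactly the negated variables of `c` true falsifies `c`.
  have hlt : satCount (clauseVars c) {c} < 2 ^ (clauseVars c).card := by
    rw [← Finset.card_powerset]
    refine Finset.card_lt_card (Finset.filter_ssubset.2
      ⟨(clauseVars c).filter (fun v => (v, false) ∈ c), by simp, ?_⟩)
    intro hs
    obtain ⟨⟨v, b⟩, hl, hsat⟩ := hs c (by simp)
    have hmem : v ∈ clauseVars c := Finset.mem_image_of_mem Prod.fst hl
    cases b
    · simp [litSat, hl, hmem] at hsat
    · simp only [litSat, if_true, Finset.mem_filter] at hsat
      exact hv v ⟨hl, hsat.2⟩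
  have hlt' : (satCount (clauseVars c) {c} : ℝ) + 1 ≤ 2 ^ (clauseVars c).card := by
    exact_mod_cast hlt
  have hpow : (1 / 2 : ℝ) ^ k ≤ (1 / 2 : ℝ) ^ (clauseVars c).card :=
    pow_le_pow_of_le_one (by norm_num) (by norm_num) hcard
  have hpos : (0 : ℝ) < 2 ^ (clauseVars c).card := by positivity
  calc (satCount (clauseVars c) {c} : ℝ) / 2 ^ (clauseVars c).card
      ≤ (2 ^ (clauseVars c).card - 1) / 2 ^ (clauseVars c).card := by gcongr; linarith
    _ = 1 - (1 / 2 : ℝ) ^ (clauseVars c).card := by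
        rw [one_div, inv_pow]; field_simp
    _ ≤ _ := by linarith

lemma satProb_packing_le {k : ℕ} (π : PCnf) (hk : IsKCnf k π) (hπ : IsPacking π) :
    satProb π ≤ (1 - (1 / 2 : ℝ) ^ k) ^ π.card := by
  induction π using Finset.induction_on with
  | empty => simp [satProb, cnfVars, cnfSat]
  | insert c π hc ih =>
    have ih' := ih ⟨fun d hd => hk.1 d (Finset.mem_insert_of_mem hd),
      fun d hd => hk.2 d (Finset.mem_insert_of_mem hd)⟩
      fun d hd e he => hπ d (Finset.mem_insert_of_mem hd) e (Finset.mem_insert_of_mem he)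
    have hdisj : Disjoint (cnfVars {c}) (cnfVars π) := by
      simp only [cnfVars, Finset.sup_singleton]
      refine Finset.disjoint_sup_right.2 fun d hd => ?_
      exact hπ c (Finset.mem_insert_self _ _) d (Finset.mem_insert_of_mem hd)
        (fun h => hc (h ▸ hd))
    have h1 := satProb_singleton_le (hk.1 c (Finset.mem_insert_self _ _))
      (hk.2 c (Finset.mem_insert_self _ _))
    rw [Finset.insert_eq, satProb_union hdisj, ← Finset.insert_eq, Finset.card_insert_of_notMem hc,
      pow_succ']
    exact mul_le_mul h1 ih' (satProb_nonneg _) ((satProb_nonneg _).trans h1)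

/-! ### Restrictions -/

/-- The unit clauses of `φ|_β` force an assignment to extend `β`; on the extensions of `β`, the
formulas `φ|_β` and `φ` agree. -/
lemma cnfSat_restrict {φ : PCnf} {V S T : Finset ℕ} (hSV : S ⊆ V) :
    cnfSat T (restrict φ V S) ↔ T ∩ V = S ∧ cnfSat T φ := by
  have hunit : cnfSat T (S.image (fun v => ({(v, true)} : PClause))) ∧
      cnfSat T ((V \ S).image (fun v => ({(v, false)} : PClause))) ↔ T ∩ V = S := by
    simp only [cnfSat, clauseSat, litSat, Finset.forall_mem_image, Finset.mem_singleton,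
      exists_eq_left, Finset.mem_sdiff, and_imp, if_true, Bool.false_eq_true, if_false]
    constructor
    · rintro ⟨h1, h2⟩
      ext v
      have := @h1 v
      have := @h2 v
      have := @hSV v
      simp only [Finset.mem_inter]; tauto
    · rintro rfl
      refine ⟨fun v hv => (Finset.mem_inter.1 hv).1, fun v hv hn hT => ?_⟩
      exact hn (Finset.mem_inter.2 ⟨hT, hv⟩)
  rw [_root_.restrict, cnfSat_union, cnfSat_union, and_assoc, hunit, and_comm]
  refine and_congr_right fun hTV => ?_
  have hlit : ∀ l : PLit, l.1 ∈ V →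
      (litSat T l ↔ (if l.2 then l.1 ∈ S else l.1 ∉ S)) := by
    intro l hl
    simp [litSat, ← hTV, hl]
  constructor
  · intro h c hc
    by_cases ht : ∃ l ∈ c, litTrue V S l
    · obtain ⟨l, hl, hlV, hl'⟩ := ht
      exact ⟨l, hl, (hlit l hlV).2 hl'⟩
    · obtain ⟨l, hl, hs⟩ := h _ (Finset.mem_image_of_mem _ (Finset.mem_filter.2 ⟨hc, ht⟩))
      exact ⟨l, (Finset.mem_filter.1 hl).1, hs⟩
  · intro h c hc
    obtain ⟨d, hd, rfl⟩ := Finset.mem_image.1 hc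
    obtain ⟨l, hl, hs⟩ := h d (Finset.mem_filter.1 hd).1
    exact ⟨l, Finset.mem_filter.2 ⟨hl, fun hf => hf.2 ((hlit l hf.1).1 hs)⟩, hs⟩

/-- Every clause of `φ|_β` is either a subclause of a clause of `φ` that avoids the variables in
`V`, or a unit clause on a variable of `V`. -/
lemma mem_restrict {φ : PCnf} {V S : Finset ℕ} (hSV : S ⊆ V) {c : PClause}
    (hc : c ∈ restrict φ V S) :
    (∃ d ∈ φ, c ⊆ d ∧ ∀ l ∈ c, l.1 ∉ V) ∨ ∃ l : PLit, l.1 ∈ V ∧ c = {l} := by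
  simp only [_root_.restrict, Finset.mem_union, Finset.mem_image] at hc
  rcases hc with (⟨d, hd, rfl⟩ | ⟨v, hv, rfl⟩) | ⟨v, hv, rfl⟩
  · obtain ⟨hd, ht⟩ := Finset.mem_filter.1 hd
    refine Or.inl ⟨d, hd, Finset.filter_subset _ _, fun l hl hlV => ?_⟩
    obtain ⟨hld, hf⟩ := Finset.mem_filter.1 hl
    by_cases h : (if l.2 then l.1 ∈ S else l.1 ∉ S)
    · exact ht ⟨l, hld, hlV, h⟩
    · exact hf ⟨hlV, h⟩
  · exact Or.inr ⟨_, hSV hv, rfl⟩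
  · exact Or.inr ⟨_, (Finset.mem_sdiff.1 hv).1, rfl⟩

lemma satProb_eq_sum_restrict {φ : PCnf} {V : Finset ℕ} (hV : V ⊆ cnfVars φ) :
    satProb φ = ∑ S ∈ V.powerset, satProb (restrict φ V S) := by
  have hvars : ∀ S ∈ V.powerset, cnfVars (restrict φ V S) ⊆ cnfVars φ := by
    intro S hS v hv
    obtain ⟨c, hc, l, hl, rfl⟩ := mem_cnfVars.1 hv
    rcases mem_restrict (Finset.mem_powerset.1 hS) hc with ⟨d, hd, hcd, -⟩ | ⟨l', hl', rfl⟩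
    · exact mem_cnfVars.2 ⟨d, hd, l, hcd hl, rfl⟩
    · rw [Finset.mem_singleton.1 hl]
      exact hV hl'
  rw [satProb_eq (subset_refl (cnfVars φ)), Finset.sum_congr rfl fun S hS => satProb_eq (hvars S hS),
    ← Finset.sum_div]
  congr 1
  rw [← Nat.cast_sum, satCount, Finset.card_eq_sum_card_fiberwise
    (f := fun T => T ∩ V) (t := V.powerset)
    (fun T _ => Finset.mem_coe.2 (Finset.mem_powerset.2 Finset.inter_subset_right))]
  congr 1
  refine Finset.sum_congr rfl fun S hS => ?_
  rw [satCount, Finset.filter_filter]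
  congr 1
  refine Finset.filter_congr fun T _ => ?_
  rw [cnfSat_restrict (Finset.mem_powerset.1 hS), and_comm]

/-- If `V` meets every nonempty clause of `φ`, then restricting to `V` shortens the clauses. -/
lemma isKCnf_restrict {k : ℕ} (hk : 2 ≤ k) {φ : PCnf} (hφ : IsKCnf k φ) {V S : Finset ℕ}
    (hSV : S ⊆ V) (hit : ∀ c ∈ φ, c.Nonempty → ∃ l ∈ c, l.1 ∈ V) :
    IsKCnf (k - 1) (restrict φ V S) := by
  constructor
  · intro c hc v hv
    rcases mem_restrict hSV hc with ⟨d, hd, hcd, -⟩ | ⟨l, -, rfl⟩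
    · exact hφ.1 d hd v ⟨hcd hv.1, hcd hv.2⟩
    · have := (Finset.mem_singleton.1 hv.1).trans (Finset.mem_singleton.1 hv.2).symm
      simp at this
  · intro c hc
    rcases mem_restrict hSV hc with ⟨d, hd, hcd, hcV⟩ | ⟨l, -, rfl⟩
    · rcases c.eq_empty_or_nonempty with rfl | hne
      · simp
      · obtain ⟨l, hl, hlV⟩ := hit d hd (hne.mono hcd)
        have hlt : c.card < d.card := Finset.card_lt_card
          ((Finset.ssubset_iff_of_subset hcd).2 ⟨l, hl, fun h => hcV l h hlV⟩)
        have := hφ.2 d hd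
        omega
    · rw [Finset.card_singleton]
      omega

/-! ### Maximal packings and the decomposition -/

/-- The variables of a packing of maximum size in `φ` meet every nonempty clause of `φ`. The empty
clause is variable-disjoint from everything, hence the nonemptiness condition. -/
lemma exists_maximal_packing (φ : PCnf) :
    ∃ π ⊆ φ, IsPacking π ∧ ∀ c ∈ φ, c.Nonempty → ∃ l ∈ c, l.1 ∈ cnfVars π := by
  obtain ⟨π, hπ, hmax⟩ := Finset.exists_max_image (φ.powerset.filter IsPacking) Finset.card
    ⟨∅, by simp [IsPacking]⟩
  obtain ⟨hπφ, hpack⟩ := Finset.mem_filter.1 hπ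
  rw [Finset.mem_powerset] at hπφ
  refine ⟨π, hπφ, hpack, fun c hc hne => ?_⟩
  by_contra! hcon
  have hcπ : c ∉ π := by
    intro h
    obtain ⟨l, hl⟩ := hne
    exact hcon l hl (mem_cnfVars.2 ⟨c, h, l, hl, rfl⟩)
  have hdisj : ∀ d ∈ π, Disjoint (clauseVars c) (clauseVars d) := by
    intro d hd
    refine Finset.disjoint_left.2 fun v hv hv' => ?_
    obtain ⟨l, hl, rfl⟩ := Finset.mem_image.1 hv
    obtain ⟨l', hl', h⟩ := Finset.mem_image.1 hv'
    exact hcon l hl (mem_cnfVars.2 ⟨d, hd, l', hl', h⟩)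
  have hins : IsPacking (insert c π) := by
    intro d hd e he hde
    rcases Finset.mem_insert.1 hd with rfl | hd' <;> rcases Finset.mem_insert.1 he with rfl | he'
    · exact absurd rfl hde
    · exact hdisj e he'
    · exact (hdisj d hd').symm
    · exact hpack d hd' e he' hde
  have := hmax (insert c π) (Finset.mem_filter.2
    ⟨Finset.mem_powerset.2 (Finset.insert_subset hc hπφ), hins⟩)
  rw [Finset.card_insert_of_notMem hcπ] at this
  omega

lemma card_cnfVars_le {k : ℕ} {φ : PCnf} (h : ∀ c ∈ φ, c.card ≤ k) :
    (cnfVars φ).card ≤ k * φ.card := by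
  rw [cnfVars, Finset.sup_eq_biUnion, mul_comm]
  exact Finset.card_biUnion_le_card_mul _ _ _ fun c hc => Finset.card_image_le.trans (h c hc)

/-- Every `k`CNF formula `φ` (for `k ≥ 2`) satisfies: there are `p ∈ ℕ` and at
most `2^{kp}` many `(k-1)`CNF formulas whose satisfaction probabilities sum to
`σ(φ)`, and moreover `σ(φ) ≤ (1 - 2^{-k})^p`. -/
theorem decompose_into_smaller_cnfs (k : ℕ) (hk : 2 ≤ k) (φ : PCnf)
    (hφ : IsKCnf k φ) :
    ∃ (p m : ℕ) (f : Fin m → PCnf), m ≤ 2 ^ (k * p) ∧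
      (∀ i, IsKCnf (k - 1) (f i)) ∧
      satProb φ = ∑ i, satProb (f i) ∧
      satProb φ ≤ (1 - (1 / 2 : ℝ) ^ k) ^ p := by
  obtain ⟨π, hπφ, hpack, hit⟩ := exists_maximal_packing φ
  have hπ : IsKCnf k π := ⟨fun c hc => hφ.1 c (hπφ hc), fun c hc => hφ.2 c (hπφ hc)⟩
  refine ⟨π.card, (cnfVars π).powerset.card,
    fun i => restrict φ (cnfVars π) ((cnfVars π).powerset.equivFin.symm i).1, ?_, ?_, ?_, ?_⟩
  · rw [Finset.card_powerset]
    exact Nat.pow_le_pow_right (by norm_num) (card_cnfVars_le hπ.2)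
  · intro i
    exact isKCnf_restrict hk hφ (Finset.mem_powerset.1 (Subtype.prop _)) hit
  · rw [satProb_eq_sum_restrict (cnfVars_mono hπφ), ← Finset.sum_coe_sort]
    exact (Equiv.sum_comp (cnfVars π).powerset.equivFin.symm
      (fun S => satProb (restrict φ (cnfVars π) S.1))).symm
  · exact (satProb_anti hπφ).trans (satProb_packing_le π hπ hpack)
end
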